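/- arXiv:1705.09027 — 12 statements merged into one kernel-verified Lean document; each statement's English description precedes it below -/
import Mathlib

section
/- For every finite dimension d and every d×d density matrix ρ that is coherent (i.e., has at least one nonzero off-diagonal entry), there exists a Hermitian d×d complex matrix W such that tr(Wρ) ≠ 0 and tr(W D) = 0 for every incoherent (diagonal) density matrix D. -/
open scoped ComplexOrder

/-- A d×d density matrix: positive semidefinite with trace 1. -/
def IsDensityMatrix {d : ℕ} (ρ : Matrix (Fin d) (Fin d) ℂ) : Prop :=
  ρ.PosSemidef ∧ ρ.trace = 1

/-- Incoherent: diagonal in the fixed computational basis. -/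
def IsIncoherent {d : ℕ} (ρ : Matrix (Fin d) (Fin d) ℂ) : Prop :=
  ∀ i j, i ≠ j → ρ i j = 0

/-- For every finite dimension `d` and every coherent density matrix `ρ`
(i.e. one with a nonzero off-diagonal entry), there exists a Hermitian
matrix `W` with `tr (W ρ) ≠ 0` while `tr (W D) = 0` for every incoherent
density matrix `D`. -/
theorem exists_stringent_coherence_witness (d : ℕ)
    (ρ : Matrix (Fin d) (Fin d) ℂ) (hρ : IsDensityMatrix ρ)
    (hcoh : ∃ i j, i ≠ j ∧ ρ i j ≠ 0) :
    ∃ W : Matrix (Fin d) (Fin d) ℂ, W.IsHermitian ∧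
      (W * ρ).trace ≠ 0 ∧
      ∀ D : Matrix (Fin d) (Fin d) ℂ,
        IsDensityMatrix D → IsIncoherent D → (W * D).trace = 0 := by
  obtain ⟨i, j, hij, hne⟩ := hcoh
  have hH : ∀ a b, star (ρ a b) = ρ b a := fun a b => hρ.1.isHermitian.apply b a
  refine ⟨Matrix.of fun a b => if a = b then 0 else ρ a b, ?_, ?_, ?_⟩
  · ext a b
    by_cases h : a = b
    · simp [Matrix.conjTranspose_apply, h]
    · have h' : b ≠ a := fun e => h e.symm
      simp only [Matrix.conjTranspose_apply, Matrix.of_apply, if_neg h, if_neg h']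
      exact hH b a
  · intro h0
    have h1 : (∑ a, ∑ b, (if a = b then 0 else Complex.normSq (ρ a b)) : ℝ) = 0 := by
      have h2 : ((∑ a, ∑ b, (if a = b then 0 else Complex.normSq (ρ a b)) : ℝ) : ℂ) = 0 := by
        rw [← h0]
        simp only [Matrix.trace, Matrix.diag, Matrix.mul_apply, Matrix.of_apply]
        push_cast
        refine Finset.sum_congr rfl fun a _ => Finset.sum_congr rfl fun b _ => ?_
        split_ifs
        · simp
        · rw [← hH a b]
          exact (Complex.mul_conj (ρ a b)).symm
      exact_mod_cast h2
    have hnn : ∀ a b, (0 : ℝ) ≤ (if a = b then 0 else Complex.normSq (ρ a b)) := by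
      intro a b
      split_ifs
      · exact le_rfl
      · exact Complex.normSq_nonneg _
    have h3 := (Finset.sum_eq_zero_iff_of_nonneg
      (fun a _ => Finset.sum_nonneg fun b _ => hnn a b)).1 h1 i (Finset.mem_univ _)
    have h4 := (Finset.sum_eq_zero_iff_of_nonneg (fun b _ => hnn i b)).1 h3 j (Finset.mem_univ _)
    rw [if_neg hij] at h4
    exact hne (Complex.normSq_eq_zero.1 h4)
  · intro D _ hD
    simp only [Matrix.trace, Matrix.diag, Matrix.mul_apply, Matrix.of_apply]
    refine Finset.sum_eq_zero fun a _ => Finset.sum_eq_zero fun b _ => ?_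
    split_ifs with h
    · simp
    · rw [hD b a (fun e => h e.symm), mul_zero]
end

section
/- For every d×d density matrix ρ, the l1-norm of coherence satisfies C_{l1}(ρ) ≤ d − 1. -/
open scoped ComplexOrder

/-- The `l₁`-norm of coherence: the sum of the moduli of the off-diagonal
entries. -/
noncomputable def Cl1 {d : ℕ} (ρ : Matrix (Fin d) (Fin d) ℂ) : ℝ :=
  ∑ i, ∑ j, if i = j then 0 else ‖ρ i j‖

lemma entry_bound {d : ℕ} (ρ : Matrix (Fin d) (Fin d) ℂ) (h : ρ.PosSemidef) (i j : Fin d) :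
    ‖ρ i j‖ ≤ ((ρ i i).re + (ρ j j).re) / 2 := by
  have h1 := (h.submatrix ![i, j]).det_nonneg
  have hji : ρ j i = star (ρ i j) := (h.isHermitian.apply j i).symm
  have hi := Complex.le_def.1 (h.diag_nonneg (i := i))
  have hj := Complex.le_def.1 (h.diag_nonneg (i := j))
  rw [Matrix.det_fin_two] at h1
  have h2 := (Complex.le_def.1 h1).1
  simp [hji] at h2 hi hj
  have h3 : ‖ρ i j‖ ^ 2 ≤ (ρ i i).re * (ρ j j).re := by
    rw [Complex.sq_norm, Complex.normSq_apply]
    rw [← hi.2, ← hj.2] at h2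
    linarith
  refine abs_le_of_sq_le_sq' ?_ (by linarith) |>.2
  nlinarith [sq_nonneg ((ρ i i).re - (ρ j j).re)]

/-- For every d×d density matrix `ρ`, the l₁-norm of coherence satisfies
`C_{l1}(ρ) ≤ d − 1`. -/
theorem Cl1_le_dim_sub_one (d : ℕ)
    (ρ : Matrix (Fin d) (Fin d) ℂ) (hρ : IsDensityMatrix ρ) :
    Cl1 ρ ≤ (d : ℝ) - 1 := by
  obtain ⟨h, ht⟩ := hρ
  have ht' : ∑ i, (ρ i i).re = 1 := by
    have := congrArg Complex.re ht
    simpa [Matrix.trace] using this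
  have key : ∀ i j, (if i = j then 0 else ‖ρ i j‖) ≤
      ((ρ i i).re + (ρ j j).re) / 2 - (if i = j then (ρ i i).re else 0) := by
    intro i j
    by_cases hij : i = j
    · subst hij
      simp
    · simpa [hij] using entry_bound ρ h i j
  refine (Finset.sum_le_sum fun i _ => Finset.sum_le_sum fun j _ => key i j).trans (le_of_eq ?_)
  simp only [Finset.sum_sub_distrib, ← Finset.sum_div, Finset.sum_add_distrib, Finset.sum_const,
    Finset.sum_ite_eq, Finset.mem_univ, if_true, ht', ← Finset.smul_sum]
  simp
end

section
/- For every normalized coherence witness W and every d×d density matrix ρ, the (real) mean value tr(Wρ) satisfies tr(Wρ) ≤ d − 1. -/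
open scoped ComplexOrder

/-- A normalized coherence witness: Hermitian, all diagonal entries zero, and
all off-diagonal entries of modulus 1. -/
def IsNormalizedWitness {d : ℕ} (W : Matrix (Fin d) (Fin d) ℂ) : Prop :=
  W.IsHermitian ∧ (∀ i, W i i = 0) ∧ ∀ i j, i ≠ j → ‖W i j‖ = 1

lemma aux_pair {d : ℕ} (ρ : Matrix (Fin d) (Fin d) ℂ) (hρ : ρ.PosSemidef) (i j : Fin d)
    (w : ℂ) (hw : ‖w‖ = 1) : (w * ρ j i).re ≤ ((ρ i i).re + (ρ j j).re) / 2 := by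
  have h := hρ.dotProduct_mulVec_nonneg (Pi.single i (-w) + Pi.single j 1)
  have h2 : star w * w = 1 := by
    have := Complex.conj_mul' w
    rw [hw] at this
    simpa using this
  have hs : ρ i j = star (ρ j i) := (hρ.1.apply i j).symm
  have e : star (Pi.single i (-w) + Pi.single j 1 : Fin d → ℂ) ⬝ᵥ
      (ρ.mulVec (Pi.single i (-w) + Pi.single j 1)) =
      ρ i i + ρ j j - (star (w * ρ j i) + w * ρ j i) := by
    rw [star_add, Pi.star_single, Pi.star_single, Matrix.mulVec_add, add_dotProduct,
      single_dotProduct, single_dotProduct]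
    simp only [Pi.add_apply, Matrix.mulVec_single, MulOpposite.op_neg, Pi.smul_apply,
      Matrix.col_apply, MulOpposite.smul_eq_mul_unop, MulOpposite.unop_neg,
      MulOpposite.unop_op, star_neg, star_one, star_mul, hs]
    linear_combination (ρ i i) * h2
  rw [e] at h
  have h3 := (Complex.le_def.1 h).1
  simp only [Complex.zero_re, Complex.sub_re, Complex.add_re, Complex.star_def,
    Complex.conj_re] at h3
  linarith

/-- For every normalized coherence witness `W` and every d×d density matrix
`ρ`, the (real) mean value `tr (W ρ)` satisfies `tr (W ρ) ≤ d − 1`. -/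
theorem witness_mean_value_le_dim_sub_one (d : ℕ)
    (W : Matrix (Fin d) (Fin d) ℂ) (hW : IsNormalizedWitness W)
    (ρ : Matrix (Fin d) (Fin d) ℂ) (hρ : IsDensityMatrix ρ) :
    ((W * ρ).trace).re ≤ (d : ℝ) - 1 := by
  obtain ⟨-, h0, h1⟩ := hW
  obtain ⟨hp, ht⟩ := hρ
  have ht' : ∑ i, (ρ i i).re = 1 := by
    have := congrArg Complex.re ht
    simpa [Matrix.trace] using this
  have key : ∀ i j, (W i j * ρ j i).re ≤
      ((ρ i i).re + (ρ j j).re) / 2 - if i = j then (ρ i i).re else 0 := by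
    intro i j
    by_cases hij : i = j
    · subst hij
      simp [h0]
    · simpa [hij] using aux_pair ρ hp i j (W i j) (h1 i j hij)
  have e : ((W * ρ).trace).re = ∑ i, ∑ j, (W i j * ρ j i).re := by
    simp only [Matrix.trace, Matrix.diag_apply, Matrix.mul_apply, Complex.re_sum]
  rw [e]
  refine (Finset.sum_le_sum fun i _ => Finset.sum_le_sum fun j _ => key i j).trans ?_
  simp only [Finset.sum_sub_distrib, ← Finset.sum_div, Finset.sum_add_distrib, ht',
    Finset.sum_ite_eq, Finset.mem_univ, if_true, Finset.sum_const, Finset.card_univ,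
    Fintype.card_fin, nsmul_eq_mul, ← Finset.mul_sum]
  linarith
end

section
/- If W is a normalized coherence witness and ρ is a d×d density matrix with tr(Wρ) = d − 1, then ρ is a maximally coherent pure state: there exists a unit vector v ∈ ℂ^d with |v_j| = 1/√d for every j such that ρ = v v†; in particular ρ_{jj} = 1/d for all j and |ρ_{jk}| = 1/d for all j ≠ k. -/
open scoped ComplexOrder

/-- If `W` is a normalized coherence witness and `ρ` is a density matrix with
`tr (W ρ) = d − 1`, then `ρ` is a maximally coherent pure state: `ρ = v v†`
for a vector `v` all of whose components have modulus `1/√d`; in particular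
`ρ_{jj} = 1/d` and `|ρ_{jk}| = 1/d` for `j ≠ k`. -/
theorem maximally_coherent_of_witness_mean_value_eq (d : ℕ)
    (W : Matrix (Fin d) (Fin d) ℂ) (hW : IsNormalizedWitness W)
    (ρ : Matrix (Fin d) (Fin d) ℂ) (hρ : IsDensityMatrix ρ)
    (hmean : (W * ρ).trace = (d : ℂ) - 1) :
    ∃ v : Fin d → ℂ,
      (∀ j, ‖v j‖ = 1 / Real.sqrt d) ∧
      (∀ j k, ρ j k = v j * starRingEnd ℂ (v k)) ∧
      (∀ j, ρ j j = 1 / (d : ℂ)) ∧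
      (∀ j k, j ≠ k → ‖ρ j k‖ = 1 / (d : ℝ)) := by
  classical
  obtain ⟨hH, hd0, hone⟩ := hW
  obtain ⟨hP, htr⟩ := hρ
  have hd : d ≠ 0 := by
    rintro rfl
    simp [Matrix.trace] at htr
  have hdC : (d : ℂ) ≠ 0 := by exact_mod_cast hd
  obtain ⟨U, hU⟩ : ∃ U : Matrix (Fin d) (Fin d) ℂ, U = W + 1 := ⟨_, rfl⟩
  have hUs : ∀ j k, star (U j k) = U k j := by
    intro j k
    have h : U.IsHermitian := by rw [hU]; exact hH.add Matrix.isHermitian_one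
    exact h.apply k j
  have hUn : ∀ j k, ‖U j k‖ = 1 := by
    intro j k
    by_cases h : j = k
    · subst h; simp [hU, hd0]
    · simp [hU, h, hone j k h]
  have hUU : ∀ j k, U j k * U k j = 1 := by
    intro j k
    rw [← hUs j k]
    have := Complex.mul_conj (U j k)
    rw [Complex.normSq_eq_norm_sq, hUn] at this
    simpa using this
  have hUd : ∀ j, U j j = 1 := by intro j; simp [hU, hd0]
  have hUtr : ∑ j, ∑ k, U j k * ρ k j = (d : ℂ) := by
    have : (U * ρ).trace = (d : ℂ) := by
      rw [hU, add_mul, one_mul, Matrix.trace_add, hmean, htr]; ring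
    simpa [Matrix.trace, Matrix.mul_apply] using this
  have htr' : ∑ j, ρ j j = 1 := by simpa [Matrix.trace] using htr
  obtain ⟨x, hx⟩ : ∃ x : Fin d → Fin d → Fin d → ℂ,
    x = fun j k => Pi.single j 1 - U k j • Pi.single k 1 := ⟨_, rfl⟩
  have hmv : ∀ j k i, (ρ.mulVec (x j k)) i = ρ i j - U k j * ρ i k := by
    intro j k i
    simp [hx, Matrix.mulVec_sub, Matrix.mulVec_smul]
  have hq : ∀ j k, star (x j k) ⬝ᵥ ρ.mulVec (x j k)
      = ρ j j - U k j * ρ j k - U j k * ρ k j + ρ k k := by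
    intro j k
    have h1 : star (x j k) = Pi.single j 1 - U j k • Pi.single k 1 := by
      rw [hx]
      simp only [star_sub, star_smul, hUs]
      congr 2 <;> (funext i; by_cases h : i = j <;> by_cases h' : i = k <;> simp [Pi.single_apply, h, h'])
    rw [h1, sub_dotProduct, smul_dotProduct, single_one_dotProduct, single_one_dotProduct,
      hmv, hmv, smul_eq_mul]
    linear_combination ρ k k * hUU j k
  have hnn : ∀ j k, 0 ≤ star (x j k) ⬝ᵥ ρ.mulVec (x j k) :=
    fun j k => hP.dotProduct_mulVec_nonneg _
  have hsum : ∑ j, ∑ k, star (x j k) ⬝ᵥ ρ.mulVec (x j k) = 0 := by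
    simp only [hq, Finset.sum_add_distrib, Finset.sum_sub_distrib]
    rw [hUtr, Finset.sum_comm (f := fun j k => U k j * ρ j k), hUtr]
    simp [← Finset.mul_sum, htr']
  have hz : ∀ j k, star (x j k) ⬝ᵥ ρ.mulVec (x j k) = 0 := by
    intro j k
    have h1 := (Finset.sum_eq_zero_iff_of_nonneg
      (fun j _ => Finset.sum_nonneg (fun k _ => hnn j k))).1 hsum j (Finset.mem_univ _)
    exact (Finset.sum_eq_zero_iff_of_nonneg (fun k _ => hnn j k)).1 h1 k (Finset.mem_univ _)
  have key : ∀ i j k, ρ i j = U k j * ρ i k := by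
    intro i j k
    have h := (hP.dotProduct_mulVec_zero_iff _).1 (hz j k)
    have := congrFun h i
    rw [hmv] at this
    simpa [sub_eq_zero] using this
  have hherm : ∀ i j, star (ρ i j) = ρ j i := fun i j => hP.1.apply j i
  have key2 : ∀ i j k, ρ j i = U j k * ρ k i := by
    intro i j k
    rw [← hherm i j, key i j k, star_mul', hUs, hherm]
  have hdiag : ∀ j, ρ j j = 1 / (d : ℂ) := by
    intro j
    have : ∀ k, ρ k k = ρ j j := by
      intro k
      rw [key k k j, key2 j k j, ← mul_assoc, hUU, one_mul]
    simp only [this] at htr'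
    rw [Finset.sum_const, Finset.card_univ, Fintype.card_fin, nsmul_eq_mul] at htr'
    rw [eq_div_iff hdC, mul_comm]; exact htr'
  have hsq : ((Real.sqrt d : ℝ) : ℂ) * ((Real.sqrt d : ℝ) : ℂ) = d := by
    rw [← Complex.ofReal_mul, Real.mul_self_sqrt (Nat.cast_nonneg d)]; simp
  let z : Fin d := ⟨0, Nat.pos_of_ne_zero hd⟩
  refine ⟨fun j => U j z / (Real.sqrt d : ℝ), ?_, ?_, hdiag, ?_⟩
  · intro j
    rw [norm_div, hUn, Complex.norm_real, Real.norm_of_nonneg (Real.sqrt_nonneg _)]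
  · intro j k
    have h : starRingEnd ℂ (U k z) = U z k := hUs k z
    rw [map_div₀, h, Complex.conj_ofReal, key j k z, key2 z j z, hdiag, div_mul_div_comm, hsq]
    ring
  · intro j k _
    rw [key j k j, hdiag, norm_mul, hUn]
    simp
end

section
/- For every normalized coherence witness W and every d×d density matrix ρ, the l1-norm of coherence is bounded below by the modulus of the mean value of W: C_{l1}(ρ) ≥ |tr(Wρ)|. -/
open scoped ComplexOrder

/-- For every normalized coherence witness `W` and every density matrix `ρ`,
the l₁-norm of coherence is bounded below by the modulus of the mean value of
`W`: `C_{l1}(ρ) ≥ |tr (W ρ)|`. -/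
theorem Cl1_ge_abs_witness_mean_value (d : ℕ)
    (W : Matrix (Fin d) (Fin d) ℂ) (hW : IsNormalizedWitness W)
    (ρ : Matrix (Fin d) (Fin d) ℂ) (hρ : IsDensityMatrix ρ) :
    ‖(W * ρ).trace‖ ≤ Cl1 ρ := by
  obtain ⟨_, h0, h1⟩ := hW
  rw [Matrix.trace_mul_comm]
  simp only [Matrix.trace, Matrix.diag, Matrix.mul_apply, Cl1]
  refine (norm_sum_le _ _).trans (Finset.sum_le_sum fun i _ => ?_)
  refine (norm_sum_le _ _).trans (Finset.sum_le_sum fun j _ => ?_)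
  by_cases h : i = j
  · subst h
    simp [h0]
  · simp [h, h1 j i (Ne.symm h)]
end

section
/- For every d×d density matrix ρ, the witnessed coherence, defined as the supremum of tr(Wρ) over all normalized coherence witnesses W, equals the l1-norm of coherence C_{l1}(ρ), and the supremum is attained by some normalized coherence witness. -/
open scoped ComplexOrder

/-- The witnessed coherence, i.e. the supremum of the mean values `tr (W ρ)`
over all normalized coherence witnesses `W`, equals the l₁-norm of coherence
`C_{l1}(ρ)`, and it is attained by some normalized witness.  This is stated
as: `C_{l1}(ρ)` is the greatest element of the set of attainable mean
values. -/
theorem witnessed_coherence_eq_Cl1 (d : ℕ)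
    (ρ : Matrix (Fin d) (Fin d) ℂ) (hρ : IsDensityMatrix ρ) :
    IsGreatest
      {x : ℝ | ∃ W : Matrix (Fin d) (Fin d) ℂ,
        IsNormalizedWitness W ∧ (W * ρ).trace = (x : ℂ)}
      (Cl1 ρ) := by
  have hH : ∀ i j, ρ j i = star (ρ i j) := fun i j => (hρ.1.isHermitian.apply j i).symm
  constructor
  · refine ⟨Matrix.of fun i j =>
        if i = j then 0 else if ρ i j = 0 then 1 else ρ i j / (‖ρ i j‖ : ℂ),
      ⟨?_, ?_, ?_⟩, ?_⟩
    · ext i j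
      simp only [Matrix.conjTranspose_apply, Matrix.of_apply]
      by_cases h : i = j
      · simp [h]
      · have h' : ¬ j = i := fun e => h e.symm
        by_cases h0 : ρ i j = 0
        · have h1 : ρ j i = 0 := by rw [hH i j, h0]; simp
          simp [h, h', h0, h1]
        · have h1 : ρ j i ≠ 0 := by rw [hH i j]; simpa using h0
          simp only [h, h', h0, h1, if_false]
          rw [hH i j]
          simp
    · intro i
      simp
    · intro i j h
      by_cases h0 : ρ i j = 0
      · simp [h, h0]
      · simp [h, h0]
    · simp only [Matrix.trace, Matrix.diag_apply, Matrix.mul_apply, Matrix.of_apply, Cl1]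
      push_cast
      refine Finset.sum_congr rfl fun i _ => Finset.sum_congr rfl fun j _ => ?_
      by_cases h : i = j
      · simp [h]
      · by_cases h0 : ρ i j = 0
        · have h1 : ρ j i = 0 := by rw [hH i j, h0]; simp
          simp [h, h0, h1]
        · have hn : (‖ρ i j‖ : ℂ) ≠ 0 := by simpa using h0
          simp only [h, h0, if_false]
          rw [hH i j, div_mul_eq_mul_div, div_eq_iff hn]
          have := Complex.mul_conj' (ρ i j)
          rw [← sq]
          exact this
  · rintro x ⟨W, ⟨_, hD, hN⟩, hx⟩
    have h1 : x ≤ ‖(W * ρ).trace‖ := by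
      rw [hx, Complex.norm_real]
      exact le_abs_self x
    refine h1.trans ?_
    simp only [Matrix.trace, Matrix.diag_apply, Matrix.mul_apply, Matrix.of_apply, Cl1]
    refine norm_sum_le_of_le _ fun i _ => norm_sum_le_of_le _ fun j _ => ?_
    by_cases h : i = j
    · subst h
      simp [hD]
    · rw [norm_mul, hN i j h, hH i j, norm_star]
      simp [h]
end

section
/- For every d×d density matrix ρ, the supremum of tr(Wρ) over all normalized coherence witnesses W equals 0 if and only if ρ is incoherent (diagonal). -/
open scoped ComplexOrder

/-- The supremum of `tr (W ρ)` over all normalized coherence witnesses `W`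
equals `0` if and only if `ρ` is incoherent (diagonal). -/
theorem witnessed_coherence_eq_zero_iff_incoherent (d : ℕ)
    (ρ : Matrix (Fin d) (Fin d) ℂ) (hρ : IsDensityMatrix ρ) :
    sSup {x : ℝ | ∃ W : Matrix (Fin d) (Fin d) ℂ,
        IsNormalizedWitness W ∧ (W * ρ).trace = (x : ℂ)} = 0 ↔
      IsIncoherent ρ := by
  have hH : ∀ i j, star (ρ j i) = ρ i j := fun i j => hρ.1.1.apply i j
  have hn : ∀ i j, ‖ρ j i‖ = ‖ρ i j‖ := fun i j => by rw [← hH i j, norm_star]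
  have htr : ∀ W : Matrix (Fin d) (Fin d) ℂ,
      (W * ρ).trace = ∑ i, ∑ j, W i j * ρ j i := fun W => by
    simp [Matrix.trace, Matrix.mul_apply]
  constructor
  · intro h0
    have hbdd : BddAbove {x : ℝ | ∃ W : Matrix (Fin d) (Fin d) ℂ,
        IsNormalizedWitness W ∧ (W * ρ).trace = (x : ℂ)} := by
      refine ⟨∑ i, ∑ j, ‖ρ j i‖, ?_⟩
      rintro x ⟨W, ⟨_, hd, ho⟩, hx⟩
      have h1 : ‖(W * ρ).trace‖ ≤ ∑ i, ∑ j, ‖ρ j i‖ := by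
        rw [htr]
        refine (norm_sum_le _ _).trans (Finset.sum_le_sum fun i _ => ?_)
        refine (norm_sum_le _ _).trans (Finset.sum_le_sum fun j _ => ?_)
        rw [norm_mul]
        by_cases hij : i = j
        · subst hij; simp [hd]
        · simp [ho i j hij]
      rw [hx, Complex.norm_real] at h1
      exact (le_abs_self x).trans h1
    let W : Matrix (Fin d) (Fin d) ℂ := fun i j =>
      if i = j then 0 else if ρ i j = 0 then 1 else ρ i j / (‖ρ i j‖ : ℂ)
    have hz : ∀ i j, ρ j i = 0 ↔ ρ i j = 0 := fun i j => by
      rw [← norm_eq_zero, hn, norm_eq_zero]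
    have hW : IsNormalizedWitness W := by
      refine ⟨?_, fun i => by simp [W], fun i j hij => ?_⟩
      · ext i j
        rw [Matrix.conjTranspose_apply]
        by_cases hij : i = j
        · simp [W, hij]
        · have hji : ¬ j = i := fun h => hij h.symm
          by_cases h : ρ i j = 0
          · simp [W, hij, hji, h, (hz i j).2 h]
          · have h' : ¬ ρ j i = 0 := fun k => h ((hz i j).1 k)
            simp only [W, hij, hji, h, h', if_false]
            rw [star_div₀, hH, hn]
            simp
      · by_cases h : ρ i j = 0
        · simp [W, hij, h]
        · simp [W, hij, h]
    have hmem : (W * ρ).trace =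
        ((∑ i, ∑ j, (if i = j then 0 else ‖ρ i j‖) : ℝ) : ℂ) := by
      rw [htr]
      push_cast
      refine Finset.sum_congr rfl fun i _ => Finset.sum_congr rfl fun j _ => ?_
      by_cases hij : i = j
      · simp [W, hij]
      · by_cases h : ρ i j = 0
        · simp [W, hij, h, (hz i j).2 h]
        · have hne : (‖ρ i j‖ : ℂ) ≠ 0 := by simpa using h
          simp only [W, hij, h, if_false]
          rw [← hH j i, div_mul_eq_mul_div, div_eq_iff hne]
          have := Complex.mul_conj' (ρ i j)
          rw [← sq]
          exact this
    have hle := le_csSup hbdd ⟨W, hW, hmem⟩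
    rw [h0] at hle
    have hnn : ∀ i j : Fin d, 0 ≤ (if i = j then (0:ℝ) else ‖ρ i j‖) := fun i j => by
      split_ifs <;> simp
    intro i j hij
    have h1 : (if i = j then (0:ℝ) else ‖ρ i j‖) ≤
        ∑ j, (if i = j then (0:ℝ) else ‖ρ i j‖) :=
      Finset.single_le_sum (f := fun j => if i = j then (0:ℝ) else ‖ρ i j‖)
        (fun j _ => hnn i j) (Finset.mem_univ j)
    have h2 : (∑ j, (if i = j then (0:ℝ) else ‖ρ i j‖)) ≤
        ∑ i, ∑ j, (if i = j then (0:ℝ) else ‖ρ i j‖) :=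
      Finset.single_le_sum (f := fun i => ∑ j, if i = j then (0:ℝ) else ‖ρ i j‖)
        (fun i _ => Finset.sum_nonneg fun j _ => hnn i j) (Finset.mem_univ i)
    rw [if_neg hij] at h1
    exact norm_le_zero_iff.1 (h1.trans (h2.trans hle))
  · intro hI
    have hall : ∀ x ∈ {x : ℝ | ∃ W : Matrix (Fin d) (Fin d) ℂ,
        IsNormalizedWitness W ∧ (W * ρ).trace = (x : ℂ)}, x = 0 := by
      rintro x ⟨W, ⟨_, hd, _⟩, hx⟩
      have : (W * ρ).trace = 0 := by
        rw [htr]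
        refine Finset.sum_eq_zero fun i _ => Finset.sum_eq_zero fun j _ => ?_
        by_cases hij : j = i
        · subst hij; simp [hd]
        · simp [hI j i hij]
      rw [this] at hx
      exact_mod_cast hx.symm
    exact le_antisymm (Real.sSup_nonpos fun x hx => (hall x hx).le)
      (Real.sSup_nonneg fun x hx => (hall x hx).ge)
end

section
/- For every d×d density matrix ρ, every normalized coherence witness W, and every incoherent unitary U, the mean value of W after the unitary is bounded by the l1-norm of coherence of the initial state: tr(W U ρ U†) ≤ C_{l1}(ρ). -/
open scoped ComplexOrder

/-- An incoherent unitary: a unitary matrix whose entries are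
`U i j = e^{iλ_j} δ_{i, f(j)}` for a permutation `f` and real phases `λ_j`. -/
def IsIncoherentUnitary {d : ℕ} (U : Matrix (Fin d) (Fin d) ℂ) : Prop :=
  U ∈ Matrix.unitaryGroup (Fin d) ℂ ∧
  ∃ (f : Equiv.Perm (Fin d)) (lam : Fin d → ℝ),
    ∀ i j, U i j = if i = f j then Complex.exp (Complex.I * lam j) else 0

/-- For every density matrix `ρ`, normalized coherence witness `W` and
incoherent unitary `U`, the mean value of `W` after the unitary is bounded by
the l₁-norm of coherence of the initial state:
`tr (W U ρ U†) ≤ C_{l1}(ρ)`. -/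
theorem witness_mean_value_after_incoherent_unitary_le_Cl1 (d : ℕ)
    (ρ : Matrix (Fin d) (Fin d) ℂ) (hρ : IsDensityMatrix ρ)
    (W : Matrix (Fin d) (Fin d) ℂ) (hW : IsNormalizedWitness W)
    (U : Matrix (Fin d) (Fin d) ℂ) (hU : IsIncoherentUnitary U) :
    ((W * (U * ρ * U.conjTranspose)).trace).re ≤ Cl1 ρ := by
  obtain ⟨-, hW0, hW1⟩ := hW
  obtain ⟨-, f, lam, hf⟩ := hU
  have hM : ∀ a b, ‖(U * ρ * U.conjTranspose) (f a) (f b)‖ = ‖ρ a b‖ := by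
    intro a b
    have h : (U * ρ * U.conjTranspose) (f a) (f b)
        = Complex.exp (Complex.I * lam a) * ρ a b
          * (starRingEnd ℂ) (Complex.exp (Complex.I * lam b)) := by
      simp [Matrix.mul_apply, hf, apply_ite (starRingEnd ℂ), -Complex.exp_conj, ← Complex.exp_conj]
    rw [h, norm_mul, norm_mul, RCLike.norm_conj, mul_comm Complex.I, mul_comm Complex.I,
      Complex.norm_exp_ofReal_mul_I, Complex.norm_exp_ofReal_mul_I]
    ring
  generalize U * ρ * U.conjTranspose = M at hM
  refine (Complex.re_le_norm _).trans ?_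
  have ht : (W * M).trace = ∑ a, ∑ b, W (f b) (f a) * M (f a) (f b) := by
    rw [Finset.sum_comm, Matrix.trace, ← Equiv.sum_comp f]
    refine Finset.sum_congr rfl fun b _ => ?_
    rw [Matrix.diag_apply, Matrix.mul_apply, ← Equiv.sum_comp f]
  rw [ht, Cl1]
  refine (norm_sum_le _ _).trans (Finset.sum_le_sum fun a _ => ?_)
  refine (norm_sum_le _ _).trans (Finset.sum_le_sum fun b _ => ?_)
  rw [norm_mul, hM]
  split_ifs with h
  · simp [h, hW0]
  · rw [hW1 _ _ (fun e => h (f.injective e).symm), one_mul]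
end

section
/- Sufficiency of the matching condition: let ρ be a d×d density matrix and W a normalized coherence witness. If there exists an incoherent unitary U such that (U† W U)_{jk} = ρ_{jk}/|ρ_{jk}| for all j ≠ k with ρ_{jk} ≠ 0, then tr(W U ρ U†) = C_{l1}(ρ), i.e., the bound tr(W UρU†) ≤ C_{l1}(ρ) is attained. -/
open scoped ComplexOrder

/-- Sufficiency of the matching condition: if an incoherent unitary `U`
satisfies `(U† W U)_{jk} = ρ_{jk}/|ρ_{jk}|` for all `j ≠ k` with
`ρ_{jk} ≠ 0`, then `tr (W U ρ U†) = C_{l1}(ρ)`: the bound is attained. -/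
theorem witness_mean_value_attained_of_matching (d : ℕ)
    (ρ : Matrix (Fin d) (Fin d) ℂ) (hρ : IsDensityMatrix ρ)
    (W : Matrix (Fin d) (Fin d) ℂ) (hW : IsNormalizedWitness W)
    (U : Matrix (Fin d) (Fin d) ℂ) (hU : IsIncoherentUnitary U)
    (hmatch : ∀ j k, j ≠ k → ρ j k ≠ 0 →
      (U.conjTranspose * W * U) j k = ρ j k / (‖ρ j k‖ : ℂ)) :
    (W * (U * ρ * U.conjTranspose)).trace = (Cl1 ρ : ℂ) := by
  obtain ⟨-, f, lam, hf⟩ := hU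
  have hdiag : ∀ j, (U.conjTranspose * W * U) j j = 0 := by
    intro j
    simp only [Matrix.mul_apply, Matrix.conjTranspose_apply, hf]
    simp only [mul_ite, mul_zero, Finset.sum_ite_eq', Finset.sum_ite_eq, Finset.mem_univ, if_true]
    refine mul_eq_zero_of_left (Finset.sum_eq_zero fun x _ => ?_) _
    by_cases hx : x = f j
    · rw [hx, hW.2.1, mul_zero]
    · simp [hx]
  have htr : (W * (U * ρ * U.conjTranspose)).trace
      = ((U.conjTranspose * W * U) * ρ).trace := by
    rw [← Matrix.mul_assoc, Matrix.trace_mul_comm]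
    simp only [Matrix.mul_assoc]
  rw [htr]
  generalize U.conjTranspose * W * U = M at *
  simp only [Matrix.trace, Matrix.diag_apply, Matrix.mul_apply, Cl1, Complex.ofReal_sum]
  refine Finset.sum_congr rfl fun j _ => Finset.sum_congr rfl fun k _ => ?_
  have hH : ρ k j = star (ρ j k) := (hρ.1.isHermitian.apply k j).symm
  split_ifs with h
  · subst h
    simp [hdiag]
  · by_cases h0 : ρ j k = 0
    · simp [hH, h0]
    · have hn : (‖ρ j k‖ : ℂ) ≠ 0 := by simpa using h0
      rw [hmatch j k h h0, hH, div_mul_eq_mul_div, div_eq_iff hn, ← sq]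
      exact Complex.mul_conj' _
end

section
/- Necessity of the matching condition: let ρ be a d×d density matrix and W a normalized coherence witness. If there exists an incoherent unitary U such that tr(W U ρ U†) = C_{l1}(ρ), then there exists a permutation f of the index set such that for all indices i, j, k with ρ_{ij} ≠ 0, ρ_{jk} ≠ 0 and ρ_{ik} ≠ 0, the phases multiply consistently: W_{f(i)f(j)} · W_{f(j)f(k)} · conj(W_{f(i)f(k)}) = (ρ_{ij} ρ_{jk} conj(ρ_{ik})) / |ρ_{ij} ρ_{jk} ρ_{ik}|. -/
open scoped ComplexOrder

/-- Necessity of the matching condition: if some incoherent unitary `U`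
achieves `tr (W U ρ U†) = C_{l1}(ρ)`, then there is a permutation `f` of the
basis indices such that for all pairwise distinct `i, j, k` with
`ρ_{ij} ≠ 0`, `ρ_{jk} ≠ 0`, `ρ_{ik} ≠ 0`, the phases of `W` and `ρ` multiply
consistently:
`W_{f(i)f(j)} W_{f(j)f(k)} conj (W_{f(i)f(k)})
  = ρ_{ij} ρ_{jk} conj (ρ_{ik}) / |ρ_{ij} ρ_{jk} ρ_{ik}|`. -/
theorem matching_condition_of_witness_mean_value_attained (d : ℕ)
    (ρ : Matrix (Fin d) (Fin d) ℂ) (hρ : IsDensityMatrix ρ)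
    (W : Matrix (Fin d) (Fin d) ℂ) (hW : IsNormalizedWitness W)
    (U : Matrix (Fin d) (Fin d) ℂ) (hU : IsIncoherentUnitary U)
    (hmean : (W * (U * ρ * U.conjTranspose)).trace = (Cl1 ρ : ℂ)) :
    ∃ f : Equiv.Perm (Fin d), ∀ i j k : Fin d,
      i ≠ j → j ≠ k → i ≠ k →
      ρ i j ≠ 0 → ρ j k ≠ 0 → ρ i k ≠ 0 →
      W (f i) (f j) * W (f j) (f k) * starRingEnd ℂ (W (f i) (f k)) =
        ρ i j * ρ j k * starRingEnd ℂ (ρ i k) /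
          (‖ρ i j * ρ j k * ρ i k‖ : ℂ) := by
  obtain ⟨hWh, hW0, hW1⟩ := hW
  obtain ⟨-, f, lam, hUf⟩ := hU
  have hH : ∀ i j, starRingEnd ℂ (ρ i j) = ρ j i := fun i j => hρ.1.isHermitian.apply j i
  obtain ⟨u, hu⟩ : ∃ u : Fin d → ℂ, u = fun j => Complex.exp (Complex.I * lam j) := ⟨_, rfl⟩
  have hUu : ∀ i j, U i j = if i = f j then u j else 0 := by
    intro i j; rw [hUf, hu]
  have hun : ∀ j, ‖u j‖ = 1 := by
    intro j; simp only [hu]; rw [mul_comm]; exact Complex.norm_exp_ofReal_mul_I _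
  have huu : ∀ j, u j * starRingEnd ℂ (u j) = 1 := by
    intro j; rw [Complex.mul_conj, Complex.normSq_eq_norm_sq, hun]; simp
  have hent : ∀ a b, (U * ρ * U.conjTranspose) (f a) (f b)
      = u a * ρ a b * starRingEnd ℂ (u b) := by
    intro a b
    simp only [Matrix.mul_apply, Matrix.conjTranspose_apply, hUu, f.injective.eq_iff]
    simp [apply_ite]
  obtain ⟨T, hT⟩ : ∃ T : Fin d → Fin d → ℂ, T = fun i j =>
    W (f i) (f j) * (u j * ρ j i * starRingEnd ℂ (u i)) := ⟨_, rfl⟩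
  have htr : (W * (U * ρ * U.conjTranspose)).trace = ∑ i, ∑ j, T i j := by
    rw [Matrix.trace, ← Equiv.sum_comp f]
    refine Finset.sum_congr rfl fun i _ => ?_
    rw [Matrix.diag_apply, Matrix.mul_apply, ← Equiv.sum_comp f]
    refine Finset.sum_congr rfl fun j _ => ?_
    rw [hent, hT]
  have hTn : ∀ i j, ‖T i j‖ = if i = j then 0 else ‖ρ i j‖ := by
    intro i j
    rw [hT]
    split_ifs with h
    · subst h; simp [hW0]
    · have := hW1 (f i) (f j) (f.injective.ne h)
      simp [this, hun, ← hH i j]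
  have hre : ∑ i, ∑ j, (T i j).re = ∑ i, ∑ j, ‖T i j‖ := by
    have h := congrArg Complex.re (htr.symm.trans hmean)
    simp only [Complex.re_sum, Complex.ofReal_re] at h
    rw [h, Cl1]; simp only [hTn]
  have hle : ∀ i j, (T i j).re ≤ ‖T i j‖ := fun i j => Complex.re_le_norm _
  have heq : ∀ i j, (T i j).re = ‖T i j‖ := by
    intro i j
    have h1 := (Finset.sum_eq_sum_iff_of_le
      (fun i _ => Finset.sum_le_sum fun j _ => hle i j)).1 hre i (Finset.mem_univ _)
    exact (Finset.sum_eq_sum_iff_of_le (fun j _ => hle i j)).1 h1 j (Finset.mem_univ _)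
  have hTeq : ∀ i j, i ≠ j → T i j = (‖ρ i j‖ : ℂ) := by
    intro i j hij
    have h1 := heq i j
    have h2 : 0 ≤ T i j := Complex.re_eq_norm.1 h1
    have h3 := hTn i j
    rw [if_neg hij] at h3
    apply Complex.ext
    · rw [h1, h3]; simp
    · simpa using (Complex.le_def.1 h2).2.symm
  have key : ∀ i j, i ≠ j → ρ i j ≠ 0 →
      W (f i) (f j) = u i * starRingEnd ℂ (u j) * ρ i j / (‖ρ i j‖ : ℂ) := by
    intro i j hij h0
    have h1 := hTeq i j hij
    rw [hT] at h1
    simp only [← hH i j] at h1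
    have hn : (‖ρ i j‖ : ℂ) ≠ 0 := by simpa using h0
    have hc : ρ i j * starRingEnd ℂ (ρ i j) = (‖ρ i j‖ : ℂ) ^ 2 := Complex.mul_conj' _
    rw [eq_div_iff hn]
    apply mul_right_cancel₀ hn
    have hi := huu i
    have hj := huu j
    linear_combination (u i * starRingEnd ℂ (u j) * ρ i j) * h1 - W (f i) (f j) * hc
      - W (f i) (f j) * ρ i j * starRingEnd ℂ (ρ i j) * (u j * starRingEnd ℂ (u j) * hi + hj)
  refine ⟨f, fun i j k hij hjk hik h1 h2 h3 => ?_⟩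
  rw [key i j hij h1, key j k hjk h2, key i k hik h3]
  have n1 : (‖ρ i j‖ : ℂ) ≠ 0 := by simpa using h1
  have n2 : (‖ρ j k‖ : ℂ) ≠ 0 := by simpa using h2
  have n3 : (‖ρ i k‖ : ℂ) ≠ 0 := by simpa using h3
  simp only [norm_mul, Complex.ofReal_mul, map_div₀, map_mul, Complex.conj_conj,
    Complex.conj_ofReal]
  have e : (u i * starRingEnd ℂ (u i)) * (u j * starRingEnd ℂ (u j)) *
    (u k * starRingEnd ℂ (u k)) = 1 := by simp only [huu, mul_one]
  rw [div_mul_div_comm, div_mul_div_comm]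
  congr 1
  linear_combination (ρ i j * ρ j k * starRingEnd ℂ (ρ i k)) * e
end

section
/- Qubit case: for every 2×2 density matrix ρ and every normalized coherence witness W (a Hermitian 2×2 matrix with zero diagonal whose off-diagonal entry has modulus 1), there exists a diagonal unitary U = diag(1, e^{iλ}) such that tr(W U ρ U†) = C_{l1}(ρ). -/
open scoped ComplexOrder

/-- Qubit case: for every 2×2 density matrix `ρ` and every normalized
coherence witness `W`, there is a diagonal unitary `U = diag(1, e^{iλ})`
such that `tr (W U ρ U†) = C_{l1}(ρ)`. -/
theorem qubit_witness_mean_value_attainable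
    (ρ : Matrix (Fin 2) (Fin 2) ℂ) (hρ : IsDensityMatrix ρ)
    (W : Matrix (Fin 2) (Fin 2) ℂ) (hW : IsNormalizedWitness W) :
    ∃ lam : ℝ,
      (W * (Matrix.diagonal ![(1 : ℂ), Complex.exp (Complex.I * lam)] * ρ *
        (Matrix.diagonal ![(1 : ℂ), Complex.exp (Complex.I * lam)]).conjTranspose)).trace
        = (Cl1 ρ : ℂ) := by
  have e10 : W 1 0 = star (W 0 1) := (hW.1.apply 1 0).symm
  have r01 : ρ 0 1 = star (ρ 1 0) := (hρ.1.isHermitian.apply 0 1).symm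
  have hn : ‖W 0 1‖ = 1 := hW.2.2 0 1 (by decide)
  refine ⟨-(W 0 1 * ρ 1 0).arg, ?_⟩
  generalize hE : Complex.exp (Complex.I * ((-(W 0 1 * ρ 1 0).arg : ℝ) : ℂ)) = E
  have key : E * (W 0 1 * ρ 1 0) = (‖ρ 1 0‖ : ℂ) := by
    conv_lhs => rw [← Complex.norm_mul_exp_arg_mul_I (W 0 1 * ρ 1 0)]
    rw [← hE, mul_left_comm, ← Complex.exp_add, norm_mul, hn]
    have : Complex.I * ((-(W 0 1 * ρ 1 0).arg : ℝ) : ℂ) + (W 0 1 * ρ 1 0).arg * Complex.I = 0 := by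
      push_cast; ring
    rw [this]; simp
  have key2 : star E * (star (W 0 1) * star (ρ 1 0)) = (‖ρ 1 0‖ : ℂ) := by
    have := congrArg star key
    simpa [mul_comm, mul_left_comm, mul_assoc] using this
  have hC : Cl1 ρ = 2 * ‖ρ 1 0‖ := by
    simp [Cl1, Fin.sum_univ_two, r01]; ring
  have hT : (W * (Matrix.diagonal ![(1 : ℂ), E] * ρ *
        (Matrix.diagonal ![(1 : ℂ), E]).conjTranspose)).trace
      = E * (W 0 1 * ρ 1 0) + star E * (star (W 0 1) * star (ρ 1 0)) := by
    simp [Matrix.trace, Matrix.mul_apply, Fin.sum_univ_two, Matrix.diagonal_apply,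
      Matrix.conjTranspose_apply, hW.2.1, e10, r01]
    ring
  rw [hT, key, key2, hC]
  push_cast; ring
end

section
/- Strict gap example: let θ ∈ (0, π/2), let ρ = |ψ⟩⟨ψ| with |ψ⟩ = (cosθ/√2)(|0⟩ + |1⟩) + sinθ|2⟩, and let W be the 3×3 Hermitian matrix with zero diagonal and entries W_{01} = W_{10} = 1, W_{12} = W_{21} = 1, W_{02} = i, W_{20} = −i. Then for every incoherent unitary U, tr(W U ρ U†) < C_{l1}(ρ) = cos²θ + √2·sin(2θ); i.e., the witnessed coherence cannot be attained by any incoherent unitary for this state and witness. -/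
open scoped ComplexOrder

lemma aux_phase (a b c : ℝ) (h1 : Real.cos (a - b) = 1) (h2 : Real.cos (b - c) = 1) :
    Real.sin (a - c) = 0 := by
  have e1 := Real.sin_sq_add_cos_sq (a - b)
  have e2 := Real.sin_sq_add_cos_sq (b - c)
  have s1 : Real.sin (a - b) = 0 := by
    rw [h1] at e1; exact pow_eq_zero_iff (two_ne_zero) |>.1 (by linarith)
  have s2 : Real.sin (b - c) = 0 := by
    rw [h2] at e2; exact pow_eq_zero_iff (two_ne_zero) |>.1 (by linarith)
  have : a - c = (a - b) + (b - c) := by ring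
  rw [this, Real.sin_add, s1, s2]; ring

lemma aux_strict (x y z a b c : ℝ) (hx : 0 < x) (hy : 0 < y) (hz : 0 < z) :
    2 * (x * y * Real.cos (a - b) + y * z * Real.cos (b - c) + x * z * Real.sin (a - c))
      < 2 * (x * y + y * z + x * z) := by
  have hxy := mul_pos hx hy
  have hyz := mul_pos hy hz
  have hxz := mul_pos hx hz
  have k1 := mul_le_mul_of_nonneg_left (Real.cos_le_one (a - b)) hxy.le
  have k2 := mul_le_mul_of_nonneg_left (Real.cos_le_one (b - c)) hyz.le
  have k3 := mul_le_mul_of_nonneg_left (Real.sin_le_one (a - c)) hxz.le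
  by_contra! h
  have h1 : Real.cos (a - b) = 1 := mul_left_cancel₀ hxy.ne' (by linarith)
  have h2 : Real.cos (b - c) = 1 := mul_left_cancel₀ hyz.ne' (by linarith)
  have h3 : Real.sin (a - c) = 1 := mul_left_cancel₀ hxz.ne' (by linarith)
  have := aux_phase a b c h1 h2
  linarith

/-- Strict gap example: for `θ ∈ (0, π/2)`, the pure qutrit state
`ρ = |ψ⟩⟨ψ|` with `|ψ⟩ = (cos θ/√2)(|0⟩+|1⟩) + sin θ |2⟩` and the witness
`W` with zero diagonal, `W₀₁ = W₁₀ = 1`, `W₁₂ = W₂₁ = 1`, `W₀₂ = i`,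
`W₂₀ = −i`, satisfy `tr (W U ρ U†) < C_{l1}(ρ) = cos²θ + √2 sin(2θ)` for
every incoherent unitary `U`. -/
theorem strict_gap_example (θ : ℝ) (hθ : θ ∈ Set.Ioo 0 (Real.pi / 2))
    (ψ : Fin 3 → ℂ)
    (hψ : ψ = ![((Real.cos θ / Real.sqrt 2 : ℝ) : ℂ),
               ((Real.cos θ / Real.sqrt 2 : ℝ) : ℂ),
               ((Real.sin θ : ℝ) : ℂ)])
    (ρ : Matrix (Fin 3) (Fin 3) ℂ)
    (hρ : ∀ j k, ρ j k = ψ j * starRingEnd ℂ (ψ k))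
    (W : Matrix (Fin 3) (Fin 3) ℂ)
    (hW : W = !![0, 1, Complex.I; 1, 0, 1; -Complex.I, 1, 0])
    (U : Matrix (Fin 3) (Fin 3) ℂ) (hU : IsIncoherentUnitary U) :
    ((W * (U * ρ * U.conjTranspose)).trace).re < Cl1 ρ ∧
      Cl1 ρ = Real.cos θ ^ 2 + Real.sqrt 2 * Real.sin (2 * θ) := by
  obtain ⟨h0, h1⟩ := hθ
  have hc : 0 < Real.cos θ := Real.cos_pos_of_mem_Ioo ⟨by linarith, h1⟩
  have hs : 0 < Real.sin θ := Real.sin_pos_of_pos_of_lt_pi h0 (by linarith [Real.pi_pos])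
  obtain ⟨q, hq⟩ : ∃ q : Fin 3 → ℝ,
      q = ![Real.cos θ / Real.sqrt 2, Real.cos θ / Real.sqrt 2, Real.sin θ] := ⟨_, rfl⟩
  have hψq : ∀ j, ψ j = (q j : ℂ) := by
    intro j; rw [hψ, hq]; fin_cases j <;> simp
  have hqpos : ∀ j, 0 < q j := by
    intro j; rw [hq]; fin_cases j <;> simp <;> positivity
  have hC : Cl1 ρ = 2 * (q 0 * q 1 + q 1 * q 2 + q 0 * q 2) := by
    simp only [Cl1, hρ, hψq, Fin.sum_univ_three, Complex.conj_ofReal, norm_mul,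
      Complex.norm_real, Real.norm_eq_abs, abs_of_pos (hqpos _)]
    simp
    ring
  refine ⟨?_, ?_⟩
  · obtain ⟨-, f, lam, hUf⟩ := hU
    obtain ⟨p, hp⟩ : ∃ p : Fin 3 → ℝ, p = fun i => q (f.symm i) := ⟨_, rfl⟩
    obtain ⟨m, hm⟩ : ∃ m : Fin 3 → ℝ, m = fun i => lam (f.symm i) := ⟨_, rfl⟩
    have hppos : ∀ j, 0 < p j := fun j => by rw [hp]; exact hqpos _
    have hU' : ∀ i j, U i j = if j = f.symm i then Complex.exp (Complex.I * m i) else 0 := by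
      intro i j
      rw [hUf, hm]
      by_cases h : i = f j
      · subst h; simp
      · rw [if_neg h, if_neg]
        rintro rfl; simp at h
    have hM : ∀ i j, (U * ρ * U.conjTranspose) i j =
        (Complex.exp (Complex.I * m i) * p i) *
          starRingEnd ℂ (Complex.exp (Complex.I * m j) * p j) := by
      intro i j
      simp only [Matrix.mul_apply, Matrix.conjTranspose_apply, hU', hρ, hψq, hp]
      simp [apply_ite (starRingEnd ℂ)]
      ring
    have hE : ∀ i, Complex.exp (Complex.I * m i) * p i =
        ⟨p i * Real.cos (m i), p i * Real.sin (m i)⟩ := by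
      intro i
      rw [mul_comm Complex.I]
      apply Complex.ext <;>
        simp [Complex.exp_ofReal_mul_I_re, Complex.exp_ofReal_mul_I_im] <;> ring
    have s1 : ∑ i, p i = ∑ i, q i := by rw [hp]; exact Equiv.sum_comp f.symm q
    have s2 : ∑ i, p i ^ 2 = ∑ i, q i ^ 2 := by
      rw [hp]; exact Equiv.sum_comp f.symm (fun i => q i ^ 2)
    simp only [Fin.sum_univ_three] at s1 s2
    have hC' : Cl1 ρ = 2 * (p 0 * p 1 + p 1 * p 2 + p 0 * p 2) := by
      rw [hC]
      have : (p 0 + p 1 + p 2) ^ 2 = (q 0 + q 1 + q 2) ^ 2 := by rw [s1]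
      linarith
    rw [hC']
    refine lt_of_eq_of_lt ?_ (aux_strict _ _ _ (m 0) (m 1) (m 2) (hppos 0) (hppos 1) (hppos 2))
    simp only [Matrix.trace, Matrix.diag_apply, Matrix.mul_apply (M := W), hM, hE,
      Fin.sum_univ_three]
    simp [hW, Real.cos_sub, Real.sin_sub]
    ring
  · rw [hC, hq, Real.sin_two_mul]
    have h2 : Real.sqrt 2 ^ 2 = 2 := Real.sq_sqrt (by norm_num)
    have h2' : Real.sqrt 2 ≠ 0 := by positivity
    simp
    field_simp
    rw [h2]
    ring
end
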